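/- For each fixed α ∈ (0,1) and p ∈ (0,1), there exist constants A > 0 and C > 0 such that for all n ≥ 2: P( |F_n(α) − log_{1/√(pq)} n| ≥ A √(ln n) ) ≤ C/n. -/

import Mathlib

/-!
Partial fillup in tries (Janson–Szpankowski), Theorem 1 (two-point concentration
of the α-fillup level `F_n(α)`).

Model: an outcome `ω : ℕ → ℕ → Bool` encodes infinitely many strings, where
`ω i j` is the `j`-th bit of the `i`-th string; the measure `ν` makes all bits
i.i.d. with `P(bit = 1) = p`.  The trie on `n` strings uses strings `0,…,n-1`.
-/

open MeasureTheory ProbabilityTheory Real Filter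

/-- The number of strings among the first `n` (encoded in `ω`) whose first `k` bits
form the word `r ∈ {0,1}^k`. -/
def prefCount (ω : ℕ → ℕ → Bool) (n k : ℕ) (r : Fin k → Bool) : ℕ :=
  ((Finset.range n).filter fun i => ∀ j : Fin k, ω i j = r j).card

/-- `X_k`: the number of words `r ∈ {0,1}^k` that are prefixes of at least two of the
first `n` strings. -/
def fillCount (ω : ℕ → ℕ → Bool) (n k : ℕ) : ℕ :=
  (Finset.univ.filter fun r : Fin k → Bool => 2 ≤ prefCount ω n k r).card

/-- `X̄_k = X_k / 2^k`, the proportion of filled words at level `k`. -/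
noncomputable def fracFilled (ω : ℕ → ℕ → Bool) (n k : ℕ) : ℝ :=
  (fillCount ω n k : ℝ) / 2 ^ k

/-- The α-fillup level `F_n(α) = max {k : X̄_k ≥ α}`. -/
noncomputable def fillupLevel (α : ℝ) (ω : ℕ → ℕ → Bool) (n : ℕ) : ℕ :=
  sSup {k | α ≤ fracFilled ω n k}

/-- `ν` is a probability measure on `ℕ → ℕ → Bool` under which all the bits
`ω i j` are i.i.d. with `P(bit = 1) = p` (characterized by cylinder probabilities). -/
def IIDBits (p : ℝ) (ν : Measure (ℕ → ℕ → Bool)) : Prop :=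
  IsProbabilityMeasure ν ∧
    ∀ (S : Finset (ℕ × ℕ)) (b : ℕ × ℕ → Bool),
      ν {ω | ∀ s ∈ S, ω s.1 s.2 = b s} =
        ∏ s ∈ S, ENNReal.ofReal (if b s then p else 1 - p)

def wordProb (p : ℝ) {k : ℕ} (r : Fin k → Bool) : ℝ :=
  ∏ j, (if r j then p else 1 - p)

def sgn (b : Bool) : ℝ := if b then 1 else -1

def wordD {k : ℕ} (r : Fin k → Bool) : ℝ := ∑ j, sgn (r j)

lemma sum_cons_bool (k : ℕ) (f : (Fin (k+1) → Bool) → ℝ) :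
    ∑ r, f r = ∑ r : Fin k → Bool, (f (Fin.cons true r) + f (Fin.cons false r)) := by
  rw [← (Fin.consEquiv (fun _ : Fin (k+1) => Bool)).sum_comp, Fintype.sum_prod_type,
    Fintype.sum_bool, ← Finset.sum_add_distrib]
  rfl

lemma sum_wordD_sq (k : ℕ) : ∑ r : Fin k → Bool, wordD r ^ 2 = k * 2 ^ k := by
  induction k with
  | zero => simp [wordD]
  | succ k ih =>
    rw [sum_cons_bool]
    have : ∀ r : Fin k → Bool, wordD (Fin.cons true r : Fin (k+1) → Bool) ^ 2
        + wordD (Fin.cons false r : Fin (k+1) → Bool) ^ 2 = 2 + 2 * wordD r ^ 2 := by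
      intro r
      simp only [wordD, Fin.sum_univ_succ, Fin.cons_zero, Fin.cons_succ, sgn]
      simp
      ring
    simp only [this, Finset.sum_add_distrib, ← Finset.mul_sum, ih]
    simp
    ring

lemma sum_wordProb (p : ℝ) (k : ℕ) : ∑ r : Fin k → Bool, wordProb p r = 1 := by
  induction k with
  | zero => simp [wordProb]
  | succ k ih =>
    rw [sum_cons_bool, ← ih]
    refine Finset.sum_congr rfl fun r _ => ?_
    simp only [wordProb, Fin.prod_univ_succ, Fin.cons_zero, Fin.cons_succ]
    simp
    ring

lemma wordProb_nonneg {p : ℝ} (hp : 0 < p) (hp1 : p < 1) {k : ℕ} (r : Fin k → Bool) :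
    0 ≤ wordProb p r := by
  refine Finset.prod_nonneg fun j _ => ?_
  split_ifs <;> linarith

/-- typical words -/
noncomputable def typ (c : ℝ) (k : ℕ) : Finset (Fin k → Bool) :=
  Finset.univ.filter fun r => wordD r ^ 2 ≤ c ^ 2 * k

lemma card_atyp (c : ℝ) (k : ℕ) (hc : 0 < c) :
    (((typ c k)ᶜ).card : ℝ) ≤ 2 ^ k / c ^ 2 := by
  rcases Nat.eq_zero_or_pos k with rfl | hk
  · have : (typ c 0)ᶜ = ∅ := by
      rw [Finset.compl_eq_empty_iff, Finset.eq_univ_iff_forall]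
      intro r; exact Finset.mem_filter.2 ⟨Finset.mem_univ _, by simp [wordD]⟩
    rw [this]; simp; positivity
  have h1 : (((typ c k)ᶜ).card : ℝ) * (c ^ 2 * k) ≤ k * 2 ^ k := by
    rw [← sum_wordD_sq, ← nsmul_eq_mul]
    refine (Finset.card_nsmul_le_sum _ (fun r => wordD r ^ 2) _ ?_).trans ?_
    · intro r hr
      simp [typ] at hr
      exact hr.le
    · exact Finset.sum_le_univ_sum_of_nonneg fun r => sq_nonneg _
  have hk' : (0:ℝ) < k := by exact_mod_cast hk
  rw [le_div_iff₀ (by positivity)]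
  refine le_of_mul_le_mul_right ?_ hk'
  linarith

lemma log_wordProb (p : ℝ) (hp : 0 < p) (hp1 : p < 1) {k : ℕ} (r : Fin k → Bool) :
    wordProb p r = Real.exp (k * ((Real.log p + Real.log (1-p)) / 2)
      + (Real.log p - Real.log (1-p)) / 2 * wordD r) := by
  have hq : 0 < 1 - p := by linarith
  have : k * ((Real.log p + Real.log (1-p)) / 2)
      + (Real.log p - Real.log (1-p)) / 2 * wordD r
      = ∑ j, ((Real.log p + Real.log (1-p)) / 2
        + (Real.log p - Real.log (1-p)) / 2 * sgn (r j)) := by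
    rw [Finset.sum_add_distrib, ← Finset.mul_sum]; simp [wordD]
  rw [this, Real.exp_sum, wordProb]
  refine Finset.prod_congr rfl fun j _ => ?_
  cases r j
  · simp [sgn]; rw [← sub_eq_add_neg]; ring_nf
    rw [show 1 - p = -p + 1 by ring] at *
    rw [Real.exp_log hq]
  · simp [sgn]; ring_nf; rw [Real.exp_log hp]

lemma meas_le {p : ℝ} (hp : 0 < p) (hp1 : p < 1) {ν : Measure (ℕ → ℕ → Bool)}
    (hν : IIDBits p ν) (n k : ℕ) (g : (Fin k → Bool) → ℝ) (hg : ∀ r, 0 ≤ g r) (c : ℝ)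
    (hc : 0 ≤ c) (E : Set (ℕ → ℕ → Bool))
    (hE : ∀ ω ∈ E, 1 ≤ c * ∏ i : Fin n, g (fun j => ω i j)) :
    ν E ≤ ENNReal.ofReal (c * (∑ r, wordProb p r * g r) ^ n) := by
  classical
  let cyl : (Fin n → Fin k → Bool) → Set (ℕ → ℕ → Bool) :=
    fun x => {ω | ∀ (i : Fin n) (j : Fin k), ω i j = x i j}
  let X : Finset (Fin n → Fin k → Bool) := Finset.univ.filter fun x => 1 ≤ c * ∏ i, g (x i)
  have hsub : E ⊆ ⋃ x ∈ X, cyl x := by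
    intro ω hω
    simp only [Set.mem_iUnion]
    exact ⟨fun i j => ω i j, by simpa [X] using hE ω hω, fun i j => rfl⟩
  have hcyl : ∀ x, ν (cyl x) = ENNReal.ofReal (∏ i, wordProb p (x i)) := by
    intro x
    let b : ℕ × ℕ → Bool := fun s =>
      if h : s.1 < n ∧ s.2 < k then x ⟨s.1, h.1⟩ ⟨s.2, h.2⟩ else true
    have h1 := hν.2 (Finset.range n ×ˢ Finset.range k) b
    have h2 : {ω : ℕ → ℕ → Bool | ∀ s ∈ Finset.range n ×ˢ Finset.range k, ω s.1 s.2 = b s}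
        = cyl x := by
      ext ω
      simp only [Set.mem_ofPred_eq, cyl, Finset.mem_product, Finset.mem_range, Prod.forall]
      constructor
      · intro h i j
        rw [h i j ⟨i.2, j.2⟩]
        simp [b]
      · intro h i j hij
        have := h ⟨i, hij.1⟩ ⟨j, hij.2⟩
        simpa [b, hij.1, hij.2] using this
    rw [← h2, h1, ENNReal.ofReal_prod_of_nonneg (fun i _ => wordProb_nonneg hp hp1 _),
      Finset.prod_product, Finset.prod_range]
    refine Finset.prod_congr rfl fun i _ => ?_
    rw [wordProb, ENNReal.ofReal_prod_of_nonneg (fun j _ => by split_ifs <;> linarith),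
      Finset.prod_range]
    refine Finset.prod_congr rfl fun j _ => ?_
    simp [b]
  calc ν E ≤ ν (⋃ x ∈ X, cyl x) := measure_mono hsub
    _ ≤ ∑ x ∈ X, ν (cyl x) := measure_biUnion_finset_le _ _
    _ = ∑ x ∈ X, ENNReal.ofReal (∏ i, wordProb p (x i)) := by simp only [hcyl]
    _ = ENNReal.ofReal (∑ x ∈ X, ∏ i, wordProb p (x i)) := by
        rw [ENNReal.ofReal_sum_of_nonneg]
        exact fun x _ => Finset.prod_nonneg fun i _ => wordProb_nonneg hp hp1 _
    _ ≤ _ := by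
        apply ENNReal.ofReal_le_ofReal
        rw [Fintype.sum_pow, Finset.mul_sum]
        calc _ ≤ ∑ x ∈ X, c * ∏ i, (wordProb p (x i) * g (x i)) := by
              refine Finset.sum_le_sum fun x hx => ?_
              rw [Finset.prod_mul_distrib]
              have h0 : 0 ≤ ∏ i, wordProb p (x i) :=
                Finset.prod_nonneg fun i _ => wordProb_nonneg hp hp1 _
              have : 1 ≤ c * ∏ i, g (x i) := by simpa [X] using hx
              nlinarith
          _ ≤ _ := by
              refine Finset.sum_le_univ_sum_of_nonneg fun x => ?_
              exact mul_nonneg hc (Finset.prod_nonneg fun i _ =>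
                mul_nonneg (wordProb_nonneg hp hp1 _) (hg _))

lemma sum_prefCount (ω : ℕ → ℕ → Bool) (n k : ℕ) (W : Finset (Fin k → Bool)) :
    ∑ r ∈ W, prefCount ω n k r = ∑ i : Fin n, if (fun j : Fin k => ω i j) ∈ W then 1 else 0 := by
  classical
  simp only [prefCount, Finset.card_filter]
  rw [Finset.sum_comm, Finset.sum_range]
  refine Finset.sum_congr rfl fun i _ => ?_
  rw [← Finset.sum_ite_eq W (fun j : Fin k => ω i j) (fun _ => 1)]
  refine Finset.sum_congr rfl fun r _ => ?_
  simp [funext_iff]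

lemma chernoff {p : ℝ} (hp : 0 < p) (hp1 : p < 1) {ν : Measure (ℕ → ℕ → Bool)}
    (hν : IIDBits p ν) (n k : ℕ) (W : Finset (Fin k → Bool)) (t m : ℝ) :
    ν {ω | m ≤ t * (∑ r ∈ W, prefCount ω n k r : ℕ)} ≤
      ENNReal.ofReal (Real.exp (n * ((Real.exp t - 1) * ∑ r ∈ W, wordProb p r) - m)) := by
  classical
  refine (meas_le hp hp1 hν n k (fun r => Real.exp (t * if r ∈ W then 1 else 0))
    (fun r => (Real.exp_pos _).le) (Real.exp (-m)) (Real.exp_pos _).le _ ?_).trans ?_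
  · intro ω hω
    simp only [Set.mem_ofPred_eq, sum_prefCount] at hω
    rw [← Real.exp_sum, ← Real.exp_add, ← Finset.mul_sum]
    apply Real.one_le_exp
    push_cast at hω
    linarith
  · apply ENNReal.ofReal_le_ofReal
    have h1 : ∑ r, wordProb p r * Real.exp (t * if r ∈ W then 1 else 0)
        = 1 + (Real.exp t - 1) * ∑ r ∈ W, wordProb p r := by
      have : ∀ r : Fin k → Bool, wordProb p r * Real.exp (t * if r ∈ W then 1 else 0)
          = wordProb p r + (Real.exp t - 1) * (if r ∈ W then wordProb p r else 0) := by
        intro r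
        split_ifs <;> simp
        ring
      simp only [this, Finset.sum_add_distrib, ← Finset.mul_sum, sum_wordProb]
      simp
    rw [sub_eq_neg_add, Real.exp_add, Real.exp_nat_mul]
    refine mul_le_mul_of_nonneg_left ?_ (Real.exp_pos _).le
    refine pow_le_pow_left₀ ?_ ?_ n
    · exact Finset.sum_nonneg fun r _ => mul_nonneg (wordProb_nonneg hp hp1 _) (Real.exp_pos _).le
    · rw [h1, add_comm]; exact Real.add_one_le_exp _

lemma fillCount_le (ω : ℕ → ℕ → Bool) (n k : ℕ) (W : Finset (Fin k → Bool)) :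
    fillCount ω n k ≤ (Wᶜ).card + ∑ r ∈ W, prefCount ω n k r := by
  classical
  have h : (Finset.univ.filter fun r : Fin k → Bool => 2 ≤ prefCount ω n k r)
      ⊆ Wᶜ ∪ W.filter fun r => 2 ≤ prefCount ω n k r := by
    intro r hr
    by_cases hW : r ∈ W <;> simp_all
  refine (Finset.card_le_card h).trans ((Finset.card_union_le _ _).trans ?_)
  gcongr
  rw [Finset.card_filter]
  refine Finset.sum_le_sum fun r _ => ?_
  split_ifs <;> omega

lemma fillCount_le_n (ω : ℕ → ℕ → Bool) (n k : ℕ) : fillCount ω n k ≤ n := by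
  have := fillCount_le ω n k Finset.univ
  rw [sum_prefCount] at this
  simpa using this

lemma fillCount_succ (ω : ℕ → ℕ → Bool) (n k : ℕ) :
    fillCount ω n (k+1) ≤ 2 * fillCount ω n k := by
  classical
  have : fillCount ω n (k+1) ≤ ((Finset.univ.filter fun r : Fin k → Bool =>
      2 ≤ prefCount ω n k r) ×ˢ (Finset.univ : Finset Bool)).card := by
    refine Finset.card_le_card_of_injOn
      (fun r => ((fun j => r j.castSucc : Fin k → Bool), r (Fin.last k))) ?_ ?_
    · intro r hr
      simp at hr ⊢
      refine hr.trans (Finset.card_le_card ?_)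
      intro i hi
      simp at hi ⊢
      exact ⟨hi.1, fun j => by simpa using hi.2 j.castSucc⟩
    · intro r _ r' _ h
      simp at h
      funext j
      refine Fin.lastCases h.2 (fun i => congrFun h.1 i) j
  rw [Finset.card_product] at this
  simp at this
  rw [fillCount, fillCount] at *
  omega

lemma fracFilled_anti (ω : ℕ → ℕ → Bool) (n : ℕ) : Antitone (fracFilled ω n) := by
  refine antitone_nat_of_succ_le fun k => ?_
  unfold fracFilled
  rw [div_le_div_iff₀ (by positivity) (by positivity)]
  have : (fillCount ω n (k+1) : ℝ) ≤ 2 * fillCount ω n k := by exact_mod_cast fillCount_succ ω n k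
  rw [pow_succ]
  nlinarith [pow_pos (two_pos : (0:ℝ) < 2) k]

lemma bdd {α : ℝ} (hα : 0 < α) (ω : ℕ → ℕ → Bool) (n : ℕ) :
    BddAbove {k | α ≤ fracFilled ω n k} := by
  refine ⟨⌈n / α⌉₊, fun k hk => ?_⟩
  simp only [Set.mem_ofPred_eq, fracFilled] at hk
  rw [le_div_iff₀ (by positivity)] at hk
  have h1 : (fillCount ω n k : ℝ) ≤ n := by exact_mod_cast fillCount_le_n ω n k
  have h2 : (k : ℝ) ≤ 2 ^ k := by exact_mod_cast (Nat.lt_two_pow_self).le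
  have : (k : ℝ) ≤ n / α := by
    rw [le_div_iff₀ hα]
    nlinarith
  exact_mod_cast this.trans (Nat.le_ceil _)

lemma le_fillup_iff {α : ℝ} (hα : 0 < α) (hα1 : α < 1) (ω : ℕ → ℕ → Bool) (n : ℕ) (hn : 2 ≤ n)
    (k : ℕ) : k ≤ fillupLevel α ω n ↔ α ≤ fracFilled ω n k := by
  constructor
  · intro h
    have hne : {k | α ≤ fracFilled ω n k}.Nonempty := by
      refine ⟨0, ?_⟩
      simp [fracFilled, fillCount, prefCount, hn, hα1.le]
    have := Nat.sSup_mem hne (bdd hα ω n)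
    exact le_trans this (fracFilled_anti ω n h)
  · intro h
    exact le_csSup (bdd hα ω n) h

lemma typ_bounds {p : ℝ} (hp : 0 < p) (hp1 : p < 1) {c : ℝ} (hc : 0 < c) {k : ℕ}
    {r : Fin k → Bool} (hr : r ∈ typ c k) {lam M : ℝ}
    (hlam : lam = -((Real.log p + Real.log (1-p)) / 2))
    (hM : M = |(Real.log p - Real.log (1-p)) / 2| * c) :
    Real.exp (-(k * lam) - M * Real.sqrt k) ≤ wordProb p r ∧
    wordProb p r ≤ Real.exp (-(k * lam) + M * Real.sqrt k) := by
  have h1 : wordD r ^ 2 ≤ c ^ 2 * k := (Finset.mem_filter.1 hr).2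
  have h2 : |wordD r| ≤ c * Real.sqrt k := by
    refine abs_le_of_sq_le_sq ?_ (by positivity)
    rw [mul_pow, Real.sq_sqrt (by positivity)]; exact h1
  have h3 : |(Real.log p - Real.log (1-p)) / 2 * wordD r| ≤ M * Real.sqrt k := by
    rw [abs_mul, hM, mul_assoc]
    gcongr
  rw [abs_le] at h3
  rw [log_wordProb p hp hp1]
  constructor <;> apply Real.exp_le_exp.2 <;> rw [hlam] <;> linarith [h3.1, h3.2]

lemma numeric_upper {s lam M B a kr : ℝ} (hs : 1/2 ≤ s) (hs2 : 1 ≤ 2 * s^2) (hl : 1/2 ≤ lam)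
    (hM : 0 ≤ M) (hB : 0 ≤ B) (ha : a = 4*M+4*B+4) (h1 : s^2/lam + a^2*s ≤ kr)
    (h2 : kr ≤ s^2/lam + a^2*s + 1) : s^2 + (-(kr*lam) + M * Real.sqrt kr) ≤ -B := by
  have hdiv : s^2/lam ≤ 2*s^2 := by
    rw [div_le_iff₀ (by linarith)]; nlinarith [sq_nonneg s]
  have ha4 : 4 ≤ a := by linarith
  have hsq : Real.sqrt kr ≤ 2*a*s := by
    apply Real.sqrt_le_iff.2 ⟨by positivity, ?_⟩
    have e1 : a^2*s ≤ 2*a^2*s^2 := by nlinarith [mul_nonneg (sq_nonneg a) (by linarith : 0 ≤ s)]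
    have e2 : 16*s^2 ≤ a^2*s^2 := by
      apply mul_le_mul_of_nonneg_right _ (sq_nonneg s); nlinarith
    nlinarith
  have h3 : M * Real.sqrt kr ≤ M * (2*a*s) := mul_le_mul_of_nonneg_left hsq hM
  have h4 : (s^2/lam + a^2*s)*lam ≤ kr*lam := mul_le_mul_of_nonneg_right h1 (by linarith)
  have h5 : (s^2/lam + a^2*s)*lam = s^2 + a^2*s*lam := by field_simp
  have h6 : a^2*s*(1/2) ≤ a^2*s*lam := mul_le_mul_of_nonneg_left hl (by positivity)
  have h7 : a^2*s = (4*M+4*B+4)*(a*s) := by rw [← ha]; ring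
  have h8 : 2 ≤ a*s := by nlinarith
  nlinarith [mul_le_mul_of_nonneg_left h8 hB]

lemma numeric_lower {s lam M B a kr : ℝ} (hs : 1/2 ≤ s) (hs2 : 1 ≤ 2 * s^2) (hl : 1/2 ≤ lam)
    (hM : 0 ≤ M) (hB : 0 ≤ B) (ha : a = 4*M+4*B+4)
    (h2 : kr ≤ s^2/lam - a^2*s + 1) : 3*s ≤ s^2 + (-(kr*lam) - M * Real.sqrt kr) := by
  have hdiv : s^2/lam ≤ 2*s^2 := by
    rw [div_le_iff₀ (by linarith)]; nlinarith [sq_nonneg s]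
  have ha4 : 4 ≤ a := by linarith
  have hsq : Real.sqrt kr ≤ 2*s := by
    apply Real.sqrt_le_iff.2 ⟨by positivity, ?_⟩
    have : 0 ≤ a^2*s := by positivity
    nlinarith
  have h3 : M * Real.sqrt kr ≤ M * (2*s) := mul_le_mul_of_nonneg_left hsq hM
  have h4 : kr*lam ≤ (s^2/lam - a^2*s + 1)*lam := mul_le_mul_of_nonneg_right h2 (by linarith)
  have h5 : (s^2/lam - a^2*s + 1)*lam = s^2 - (a^2*s-1)*lam := by field_simp; ring
  have h9 : 16*M+16 ≤ a^2 := by nlinarith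
  have h10 : (16*M+16)*s ≤ a^2*s := mul_le_mul_of_nonneg_right h9 (by linarith)
  have h11 : 0 ≤ M*s := by positivity
  have h6 : (a^2*s-1)*(1/2) ≤ (a^2*s-1)*lam := mul_le_mul_of_nonneg_left hl (by nlinarith)
  nlinarith

lemma exp_decay {δ γ : ℝ} (hδ : 0 < δ) (hγ : 0 < γ) : ∃ C1 > (0:ℝ), ∀ n : ℕ, 2 ≤ n → ∀ Y : ℝ,
    Real.exp (γ * Real.log n) ≤ Y → Real.exp (-(δ * Y / 2)) ≤ C1 / n := by
  obtain ⟨m, hm⟩ := exists_nat_ge (1/γ)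
  refine ⟨m.factorial / (δ/2)^m, by positivity, fun n hn Y hY => ?_⟩
  have hn0 : (0:ℝ) < n := by positivity
  have hlog : 0 ≤ Real.log n := Real.log_natCast_nonneg n
  have hY0 : 0 < Y := (Real.exp_pos _).trans_le hY
  have h1 : (n:ℝ) ≤ Y^m := by
    calc (n:ℝ) = Real.exp (1 * Real.log n) := by rw [one_mul, Real.exp_log hn0]
      _ ≤ Real.exp (m * (γ * Real.log n)) := by
        apply Real.exp_le_exp.2
        rw [← mul_assoc]
        apply mul_le_mul_of_nonneg_right _ hlog
        rwa [div_le_iff₀ hγ] at hm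
      _ = Real.exp (γ * Real.log n) ^ m := Real.exp_nat_mul _ _
      _ ≤ Y^m := by gcongr
  have h2 := Real.pow_div_factorial_le_exp (δ * Y / 2) (by positivity) m
  rw [Real.exp_neg, inv_le_comm₀ (Real.exp_pos _) (by positivity)]
  refine le_trans ?_ h2
  rw [inv_div, div_div_eq_mul_div]
  gcongr
  rw [show δ * Y / 2 = (δ/2) * Y by ring, mul_pow, mul_comm]
  gcongr

lemma upper_prob {p α δ c lam M B a s : ℝ} (hp : 0 < p) (hp1 : p < 1)
    {ν : Measure (ℕ → ℕ → Bool)} (hν : IIDBits p ν) (hδ : 0 < δ) (hαδ : 2 * δ ≤ α)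
    (hc : 0 < c) (hcδ : c ^ 2 = 1 / δ)
    (hlam : lam = -((Real.log p + Real.log (1-p)) / 2))
    (hM : M = |(Real.log p - Real.log (1-p)) / 2| * c)
    (hl : 1/2 ≤ lam) (hB : 0 ≤ B) (hBδ : Real.exp (-B) = δ / 4) (ha : a = 4*M+4*B+4)
    (n : ℕ) (hn : 2 ≤ n) (hs : 1/2 ≤ s) (hs2 : s^2 = Real.log n) (hs3 : 1 ≤ 2 * s^2)
    (k : ℕ) (h1 : s^2/lam + a^2*s ≤ k) (h2 : k ≤ s^2/lam + a^2*s + 1) :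
    ν {ω | α ≤ fracFilled ω n k} ≤ ENNReal.ofReal (Real.exp (-(δ * 2 ^ k / 2))) := by
  have hn0 : (0:ℝ) < n := by positivity
  have hM0 : 0 ≤ M := by rw [hM]; positivity
  have hsub : {ω | α ≤ fracFilled ω n k} ⊆
      {ω | δ * 2 ^ k ≤ 1 * ((∑ r ∈ typ c k, prefCount ω n k r : ℕ) : ℝ)} := by
    intro ω hω
    simp only [Set.mem_ofPred_eq, fracFilled] at hω ⊢
    rw [le_div_iff₀ (by positivity)] at hω
    have e1 : (fillCount ω n k : ℝ) ≤ ((typ c k)ᶜ).card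
        + ((∑ r ∈ typ c k, prefCount ω n k r : ℕ) : ℝ) := by
      exact_mod_cast fillCount_le ω n k (typ c k)
    have e2 := card_atyp c k hc
    rw [hcδ, div_div_eq_mul_div, div_one] at e2
    have e3 : 2 * δ * 2 ^ k ≤ α * 2 ^ k := by gcongr
    linarith
  refine (measure_mono hsub).trans ((chernoff hp hp1 hν n k (typ c k) 1 (δ * 2 ^ k)).trans ?_)
  apply ENNReal.ofReal_le_ofReal
  apply Real.exp_le_exp.2
  have hw : ∀ r ∈ typ c k, n * wordProb p r ≤ δ / 4 := by
    intro r hr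
    have h3 := (typ_bounds hp hp1 hc hr hlam hM).2
    calc n * wordProb p r ≤ Real.exp (s^2) * Real.exp (-(k * lam) + M * Real.sqrt k) := by
          rw [hs2, Real.exp_log hn0]; gcongr
      _ = Real.exp (s^2 + (-(k * lam) + M * Real.sqrt k)) := (Real.exp_add _ _).symm
      _ ≤ Real.exp (-B) := Real.exp_le_exp.2 (numeric_upper hs hs3 hl hM0 hB ha h1 h2)
      _ = δ / 4 := hBδ
  have hsum : n * ∑ r ∈ typ c k, wordProb p r ≤ 2 ^ k * (δ / 4) := by
    rw [Finset.mul_sum]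
    refine (Finset.sum_le_card_nsmul _ _ _ hw).trans ?_
    rw [nsmul_eq_mul]
    gcongr
    have : (typ c k).card ≤ 2 ^ k := by
      refine (Finset.card_le_univ _).trans ?_
      simp
    exact_mod_cast this
  have he : Real.exp 1 - 1 ≤ 2 := by linarith [Real.exp_one_lt_d9]
  have hs0 : 0 ≤ n * ∑ r ∈ typ c k, wordProb p r :=
    mul_nonneg hn0.le (Finset.sum_nonneg fun r _ => wordProb_nonneg hp hp1 r)
  nlinarith [mul_le_mul_of_nonneg_right he hs0]

lemma lower_prob {p α δ c lam M B a s : ℝ} (hp : 0 < p) (hp1 : p < 1)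
    {ν : Measure (ℕ → ℕ → Bool)} (hν : IIDBits p ν) (hδ : 0 < δ) (hαδ : δ ≤ 1 - α)
    (hc : 0 < c) (hcδ : c ^ 2 = 1 / δ)
    (hlam : lam = -((Real.log p + Real.log (1-p)) / 2))
    (hM : M = |(Real.log p - Real.log (1-p)) / 2| * c)
    (hl : 1/2 ≤ lam) (hl2 : Real.log 2 ≤ lam) (hB : 0 ≤ B) (ha : a = 4*M+4*B+4)
    (n : ℕ) (hn : 2 ≤ n) (hs : 1/2 ≤ s) (hs2 : s^2 = Real.log n) (hs3 : 1 ≤ 2 * s^2)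
    (k : ℕ) (h2 : k ≤ s^2/lam - a^2*s + 1) :
    ν {ω | fracFilled ω n k < α} ≤ ENNReal.ofReal (2 * Real.exp 1 / n) := by
  have hn0 : (0:ℝ) < n := by positivity
  have hM0 : 0 ≤ M := by rw [hM]; positivity
  have hsub : {ω | fracFilled ω n k < α} ⊆
      ⋃ r ∈ typ c k, {ω | (-1 : ℝ) ≤ (-1) * ((∑ r ∈ {r}, prefCount ω n k r : ℕ) : ℝ)} := by
    intro ω hω
    simp only [Set.mem_ofPred_eq, fracFilled] at hω
    rw [div_lt_iff₀ (by positivity)] at hω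
    by_contra hcon
    simp only [Set.mem_iUnion, Set.mem_ofPred_eq, Finset.sum_singleton, not_exists] at hcon
    have hfill : (typ c k).card ≤ fillCount ω n k := by
      refine Finset.card_le_card fun r hr => ?_
      have := hcon r hr
      refine Finset.mem_filter.2 ⟨Finset.mem_univ _, ?_⟩
      have : (1:ℝ) < prefCount ω n k r := by linarith
      exact_mod_cast this
    have e1 : ((typ c k).card : ℝ) + ((typ c k)ᶜ).card = 2 ^ k := by
      have := Finset.card_add_card_compl (typ c k)
      have h2k : Fintype.card (Fin k → Bool) = 2 ^ k := by simp
      rw [h2k] at this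
      exact_mod_cast this
    have e2 := card_atyp c k hc
    rw [hcδ, div_div_eq_mul_div, div_one] at e2
    have e3 : δ * 2 ^ k ≤ (1 - α) * 2 ^ k := by gcongr
    have e4 : ((typ c k).card : ℝ) ≤ fillCount ω n k := by exact_mod_cast hfill
    linarith
  have hr : ∀ r ∈ typ c k,
      ν {ω | (-1 : ℝ) ≤ (-1) * ((∑ r ∈ {r}, prefCount ω n k r : ℕ) : ℝ)} ≤
        ENNReal.ofReal (Real.exp 1 / n ^ 2) := by
    intro r hr
    refine (chernoff hp hp1 hν n k {r} (-1) (-1)).trans ?_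
    apply ENNReal.ofReal_le_ofReal
    have h3 := (typ_bounds hp hp1 hc hr hlam hM).1
    have h4 : Real.exp (3 * s) ≤ n * wordProb p r := by
      calc Real.exp (3 * s) ≤ Real.exp (s^2 + (-(k * lam) - M * Real.sqrt k)) :=
            Real.exp_le_exp.2 (numeric_lower hs hs3 hl hM0 hB ha h2)
        _ = Real.exp (s^2) * Real.exp (-(k * lam) - M * Real.sqrt k) := Real.exp_add _ _
        _ ≤ n * wordProb p r := by
          rw [hs2, Real.exp_log hn0]; gcongr
    have h5 := Real.pow_div_factorial_le_exp (3 * s) (by positivity) 2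
    norm_num at h5
    have h6 : Real.exp 1 / (n:ℝ) ^ 2 = Real.exp (1 - 2 * s ^ 2) := by
      rw [Real.exp_sub, hs2, show 2 * Real.log n = ((2:ℕ):ℝ) * Real.log n by norm_num,
        Real.exp_nat_mul, Real.exp_log hn0]
    rw [h6]
    apply Real.exp_le_exp.2
    rw [Finset.sum_singleton]
    have he : Real.exp (-1) ≤ 1 / 2 := by linarith [Real.exp_neg_one_lt_d9]
    have h7 : 0 ≤ n * wordProb p r := (Real.exp_pos _).le.trans h4
    nlinarith [mul_le_mul_of_nonneg_right he h7]
  have hk2 : (2:ℝ) ^ k ≤ 2 * n := by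
    have : (2:ℝ) ^ k = Real.exp (k * Real.log 2) := by
      rw [Real.exp_nat_mul, Real.exp_log two_pos]
    rw [this, show (2:ℝ) * n = Real.exp (Real.log 2 + Real.log n) by
      rw [Real.exp_add, Real.exp_log two_pos, Real.exp_log hn0]]
    apply Real.exp_le_exp.2
    have l2 : 0 < Real.log 2 := Real.log_pos (by norm_num)
    have : (k:ℝ) ≤ s^2/lam + 1 := by
      have : 0 ≤ a^2*s := by positivity
      linarith
    have h8 : s^2/lam * Real.log 2 ≤ s^2 := by
      rw [div_mul_eq_mul_div, div_le_iff₀ (by linarith)]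
      gcongr
    nlinarith
  calc _ ≤ _ := measure_mono hsub
    _ ≤ _ := measure_biUnion_finset_le _ _
    _ ≤ ∑ r ∈ typ c k, ENNReal.ofReal (Real.exp 1 / n ^ 2) := Finset.sum_le_sum hr
    _ = ENNReal.ofReal ((typ c k).card * (Real.exp 1 / n ^ 2)) := by
      rw [Finset.sum_const, nsmul_eq_mul, ENNReal.ofReal_mul (by positivity),
        ENNReal.ofReal_natCast]
    _ ≤ _ := by
      apply ENNReal.ofReal_le_ofReal
      have : (typ c k).card ≤ 2 ^ k := by
        refine (Finset.card_le_univ _).trans ?_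
        simp
      have : ((typ c k).card : ℝ) ≤ 2 ^ k := by exact_mod_cast this
      calc _ ≤ (2 * n : ℝ) * (Real.exp 1 / n ^ 2) := by gcongr; linarith
        _ = _ := by field_simp

/-- Lemma B of Janson–Szpankowski: a large-deviation estimate for the α-fillup level:
`P(|F_n(α) - log_{1/√(pq)} n| ≥ A √(ln n)) = O(1/n)`. -/
theorem fillupLevel_large_deviation
    (p q α : ℝ) (hp : 0 < p) (hp1 : p < 1) (hq : q = 1 - p) (hα : 0 < α) (hα1 : α < 1)
    (ν : Measure (ℕ → ℕ → Bool)) (hν : IIDBits p ν) :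
    ∃ A > (0 : ℝ), ∃ C > (0 : ℝ), ∀ n : ℕ, 2 ≤ n →
      ν {ω | A * Real.sqrt (Real.log n) ≤
          |(fillupLevel α ω n : ℝ) - Real.logb (1 / Real.sqrt (p * q)) n|} ≤
        ENNReal.ofReal (C / n) := by
  subst hq
  have hq0 : 0 < 1 - p := by linarith
  set δ := min α (1 - α) / 2 with hδdef
  have hmin : 0 < min α (1 - α) := lt_min hα (by linarith)
  have hδ : 0 < δ := by positivity
  have hδ1 : 2 * δ ≤ α := by
    have := min_le_left α (1 - α)
    linarith
  have hδ2 : δ ≤ 1 - α := by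
    have := min_le_right α (1 - α)
    linarith
  set c := Real.sqrt (1 / δ) with hcdef
  have hc : 0 < c := Real.sqrt_pos.2 (by positivity)
  have hcδ : c ^ 2 = 1 / δ := Real.sq_sqrt (by positivity)
  set lam := -((Real.log p + Real.log (1-p)) / 2) with hlam
  set M := |(Real.log p - Real.log (1-p)) / 2| * c with hM
  have hM0 : 0 ≤ M := by positivity
  set B := -Real.log (δ / 4) with hBdef
  have hB : 0 ≤ B := by
    have := Real.log_nonpos (x := δ / 4) (by positivity) (by linarith)
    linarith
  have hBδ : Real.exp (-B) = δ / 4 := by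
    rw [hBdef, neg_neg, Real.exp_log (by positivity)]
  set a := 4*M+4*B+4 with ha
  have hl2 : Real.log 2 ≤ lam := by
    have h1 : Real.log (p * (1 - p)) ≤ Real.log ((2 ^ 2)⁻¹) :=
      Real.log_le_log (by positivity) (by nlinarith [sq_nonneg (p - 1/2)])
    rw [Real.log_inv, Real.log_pow, Real.log_mul hp.ne' hq0.ne'] at h1
    push_cast at h1
    linarith
  have hlog2 := Real.log_two_gt_d9
  have hl : 1/2 ≤ lam := by linarith
  have hbase : Real.log (1 / Real.sqrt (p * (1 - p))) = lam := by
    rw [one_div, Real.log_inv, Real.log_sqrt (by positivity), Real.log_mul hp.ne' hq0.ne']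
  obtain ⟨C1, hC1, hdecay⟩ := exp_decay (δ := δ) (γ := Real.log 2 / lam) hδ
    (div_pos (by linarith) (by linarith))
  refine ⟨a ^ 2, by positivity, C1 + 2 * Real.exp 1, by positivity, fun n hn => ?_⟩
  have hn0 : (0:ℝ) < n := by positivity
  have hlogn : Real.log 2 ≤ Real.log n := Real.log_le_log two_pos (by exact_mod_cast hn)
  set s := Real.sqrt (Real.log n) with hsdef
  have hs2 : s ^ 2 = Real.log n := Real.sq_sqrt (by linarith)
  have hs3 : 1 ≤ 2 * s ^ 2 := by linarith
  have hs0 : 0 ≤ s := Real.sqrt_nonneg _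
  have hs : 1/2 ≤ s := by nlinarith
  have hL : Real.logb (1 / Real.sqrt (p * (1 - p))) n = s ^ 2 / lam := by
    rw [Real.logb, hbase, hs2]
  rw [hL]
  have hL0 : 0 ≤ s ^ 2 / lam := div_nonneg (sq_nonneg _) (by linarith)
  set L := s ^ 2 / lam with hLdef
  set k1 := ⌈L + a ^ 2 * s⌉₊ with hk1
  have hk1a : L + a ^ 2 * s ≤ k1 := Nat.le_ceil _
  have hk1b : (k1:ℝ) ≤ L + a ^ 2 * s + 1 := (Nat.ceil_lt_add_one (by positivity)).le
  have hup : ν {ω | α ≤ fracFilled ω n k1} ≤ ENNReal.ofReal (C1 / n) := by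
    refine (upper_prob hp hp1 hν hδ hδ1 hc hcδ hlam hM hl hB hBδ ha n hn hs hs2 hs3 k1
      hk1a hk1b).trans (ENNReal.ofReal_le_ofReal (hdecay n hn _ ?_))
    have : (2:ℝ) ^ k1 = Real.exp (k1 * Real.log 2) := by
      rw [Real.exp_nat_mul, Real.exp_log two_pos]
    rw [this]
    apply Real.exp_le_exp.2
    have h1 : L ≤ k1 := le_trans (by have : 0 ≤ a ^ 2 * s := by positivity
                                     linarith) hk1a
    calc Real.log 2 / lam * Real.log n = L * Real.log 2 := by rw [hLdef, hs2]; ring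
      _ ≤ _ := by gcongr
  have hlow : ν {ω | (fillupLevel α ω n : ℝ) ≤ L - a ^ 2 * s} ≤
      ENNReal.ofReal (2 * Real.exp 1 / n) := by
    rcases lt_or_ge (L - a ^ 2 * s) 0 with hneg | hpos
    · have : {ω | (fillupLevel α ω n : ℝ) ≤ L - a ^ 2 * s} = ∅ := by
        ext ω
        simp only [Set.mem_ofPred_eq, Set.mem_empty_iff_false, iff_false, not_le]
        exact hneg.trans_le (Nat.cast_nonneg _)
      rw [this]; simp
    · have hk2 : ((⌊L - a ^ 2 * s⌋₊ + 1 : ℕ) : ℝ) ≤ L - a ^ 2 * s + 1 := by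
        push_cast
        linarith [Nat.floor_le hpos]
      refine le_trans (measure_mono ?_) (lower_prob (α := α) hp hp1 hν hδ hδ2 hc hcδ hlam hM hl hl2 hB ha
        n hn hs hs2 hs3 _ hk2)
      intro ω hω
      simp only [Set.mem_ofPred_eq] at hω ⊢
      rw [← not_le, ← le_fillup_iff hα hα1 ω n hn, not_le, Nat.lt_succ_iff]
      exact Nat.le_floor hω
  have hsub : {ω | a ^ 2 * s ≤ |(fillupLevel α ω n : ℝ) - L|} ⊆
      {ω | α ≤ fracFilled ω n k1} ∪ {ω | (fillupLevel α ω n : ℝ) ≤ L - a ^ 2 * s} := by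
    intro ω hω
    simp only [Set.mem_ofPred_eq] at hω
    rcases le_abs.1 hω with h | h
    · left
      rw [Set.mem_ofPred_eq, ← le_fillup_iff hα hα1 ω n hn]
      exact Nat.ceil_le.2 (by linarith)
    · right
      rw [Set.mem_ofPred_eq]
      linarith
  calc _ ≤ _ := measure_mono hsub
    _ ≤ _ := measure_union_le _ _
    _ ≤ _ := add_le_add hup hlow
    _ = _ := by
      rw [← ENNReal.ofReal_add (by positivity) (by positivity), add_div]
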